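/- Let k >= 0, j >= 0, m >= 1 be integers and let r_1, ..., r_m be nonnegative integers with r_1 + 2*r_2 + ... + m*r_m = m; set r = r_1 + ... + r_m and n = 2m + kj. Then the number of k-paths P in P_{n,k}^{m,j} with \alpha_i(P) = r_i for every i equals (1/(m+1)) * C(m+j, m) * C(m+j+1, r) * r!/(r_1! r_2! ... r_m!). In particular (the case k = 0, j = 0), the number of Dyck paths of length 2m with \alpha_i = r_i for every i equals (1/(m+1)) * C(m+1, r) * r!/(r_1! ... r_m!). -/

import Mathlib

open Finset

inductive Step : Type
  | u | d | h
deriving DecidableEq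

/-- Lengths of maximal blocks of letters with `wt s ≠ none`, weighted by `wt`. -/
def runs (wt : Step → Option ℕ) : List Step → List ℕ
  | [] => []
  | s :: l =>
    match wt s, runs wt l with
    | none, r => r
    | some n, r =>
      match l with
      | [] => [n]
      | s' :: _ =>
        match wt s' with
        | none => n :: r
        | some _ =>
          match r with
          | a :: rest => (n + a) :: rest
          | [] => [n]

def uRuns : List Step → List ℕ :=
  runs (fun s => match s with | Step.u => some 1 | _ => none)

def uhRuns (k : ℕ) : List Step → List ℕ :=
  runs (fun s => match s with | Step.u => some 1 | Step.h => some k | Step.d => none)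

def alpha (i : ℕ) (w : List Step) : ℕ := (uRuns w).count i

def beta (i : ℕ) (w : List Step) : ℕ := (uRuns w).tail.count i

def IsNonneg (w : List Step) : Prop :=
  ∀ i : ℕ, (w.take i).count Step.d ≤ (w.take i).count Step.u

def pathSet (m j : ℕ) : Set (List Step) :=
  {w | w.count Step.u = m ∧ w.count Step.d = m ∧ w.count Step.h = j ∧ IsNonneg w}

/-- no horizontal step lies on the x-axis -/
def NoLowH (w : List Step) : Prop :=
  ∀ (i : ℕ) (hi : i < w.length), w[i]'hi = Step.h →
    (w.take i).count Step.u ≠ (w.take i).count Step.d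

def qSet (m j : ℕ) : Set (List Step) :=
  {w | w ∈ pathSet m j ∧ NoLowH w}

/-- normalized partial Bell polynomial (r!/m!) B_{m,r}(1!t₁,2!t₂,…) -/
def bellNorm (m r : ℕ) (t : ℕ → ℚ) : ℚ :=
  ∑ f : Fin m → Fin (m + 1),
    if (∑ i : Fin m, (f i : ℕ)) = r ∧ (∑ i : Fin m, ((i : ℕ) + 1) * (f i : ℕ)) = m then
      (r.factorial : ℚ) / (∏ i : Fin m, ((f i : ℕ).factorial : ℚ)) * ∏ i : Fin m, t ((i : ℕ) + 1) ^ (f i : ℕ)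
    else 0

/-- normalized potential polynomial  P_p^{(lam)}(1!t₁,2!t₂,…)/p! -/
def potential (lam p : ℕ) (t : ℕ → ℚ) : ℚ :=
  ∑ r ∈ Finset.range (p + 1), (Nat.choose lam r : ℚ) * bellNorm p r t

/-!
Append a down-step to a path and cut the result after each letter `d` or `h`. This gives `m + j + 1`
blocks, each consisting of up-steps followed by one `d` or `h`; the nonzero numbers of up-steps in
the blocks are the lengths of the `u`-segments. The rises of the blocks sum to `-1`, and the path
stays above the axis exactly when the walk of block rises reaches `-1` only at its end. By the cycle
lemma, exactly one rotation of each sequence of blocks has this property, namely the one starting at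
the leftmost minimum of the partial sums. Hence the paths number `1 / (m + j + 1)` times all the
sequences of blocks, and for these the block sizes and the block endings are arranged independently,
in `C(m + j + 1, r) * r! / (r_1! ⋯ r_m!)` and `C(m + j + 1, m + 1)` ways. The form of the result
follows from `C(m + j + 1, m + 1) / (m + j + 1) = C(m + j, m) / (m + 1)`.
-/

section Arrangements

variable {α β : Type*} [DecidableEq α] [DecidableEq β]

lemma countPerms_mul_prod_factorial_count {s : Multiset α} {T : Finset α} (h : s.toFinset ⊆ T) :
    s.countPerms * ∏ a ∈ T, (s.count a).factorial = s.card.factorial := by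
  have hsupp : s.toFinsupp.support ⊆ T := by rwa [Multiset.toFinsupp_support]
  rw [Multiset.countPerms, Finsupp.multinomial_eq_of_support_subset hsupp, mul_comm,
    ← Multiset.sum_count_eq_card fun a ha => h (Multiset.mem_toFinset.2 ha)]
  exact Nat.multinomial_spec T s.toFinsupp

lemma prod_factorial_count_eq_count_mul {s : Multiset α} {T : Finset α} {a : α} (has : a ∈ s)
    (haT : a ∈ T) : ∏ b ∈ T, (s.count b).factorial =
      s.count a * ∏ b ∈ T, ((s.erase a).count b).factorial := by
  rw [← mul_prod_erase T _ haT, ← mul_prod_erase T _ haT, Multiset.count_erase_self, ← mul_assoc,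
    Nat.mul_factorial_pred (Multiset.count_pos.2 has).ne']
  congr 1
  refine prod_congr rfl fun b hb => ?_
  rw [Multiset.count_erase_of_ne (ne_of_mem_erase hb)]

/-- The lists whose multiset of entries is `s`, each counted once (unlike in `Multiset.lists`,
where rearranging equal entries produces repetitions). -/
def arrangements (s : Multiset α) : Finset (List α) :=
  s.lists.toFinset

@[simp]
lemma mem_arrangements {s : Multiset α} {l : List α} :
    l ∈ arrangements s ↔ (l : Multiset α) = s := by
  simp [arrangements, eq_comm]

lemma cons_mem_arrangements {s : Multiset α} {a : α} {l : List α} :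
    a :: l ∈ arrangements s ↔ a ∈ s ∧ l ∈ arrangements (s.erase a) := by
  simp only [mem_arrangements, ← Multiset.cons_coe]
  constructor
  · rintro rfl
    simp
  · rintro ⟨ha, hl⟩
    rw [hl, Multiset.cons_erase ha]

lemma card_arrangements_eq_sum {s : Multiset α} (hs : s ≠ 0) :
    #(arrangements s) = ∑ a ∈ s.toFinset, #(arrangements (s.erase a)) := by
  rw [← card_sigma]
  symm
  refine card_bij (fun x _ => x.1 :: x.2) ?_ ?_ ?_
  · rintro ⟨a, l⟩ h
    simpa only [mem_sigma, Multiset.mem_toFinset, ← cons_mem_arrangements] using h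
  · rintro ⟨a, l⟩ - ⟨b, l'⟩ - h
    obtain ⟨rfl, rfl⟩ := List.cons.inj h
    rfl
  · rintro (_ | ⟨a, l⟩) h
    · exact absurd (mem_arrangements.1 h).symm hs
    · refine ⟨⟨a, l⟩, ?_, rfl⟩
      simpa only [mem_sigma, Multiset.mem_toFinset, ← cons_mem_arrangements] using h

lemma card_arrangements_mul_prod_factorial_count {s : Multiset α} {T : Finset α}
    (h : s.toFinset ⊆ T) :
    #(arrangements s) * ∏ a ∈ T, (s.count a).factorial = s.card.factorial := by
  induction hn : s.card generalizing s with
  | zero =>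
    obtain rfl := Multiset.card_eq_zero.1 hn
    simp [arrangements, ← Multiset.coe_nil]
  | succ n ih =>
    have hs : s ≠ 0 := by
      rintro rfl
      simp at hn
    have hterm : ∀ a ∈ s.toFinset,
        #(arrangements (s.erase a)) * ∏ b ∈ T, (s.count b).factorial =
          s.count a * n.factorial := by
      intro a ha
      have has : a ∈ s := Multiset.mem_toFinset.1 ha
      have hsub : (s.erase a).toFinset ⊆ T :=
        (Multiset.toFinset_subset.2 (s.erase_subset a)).trans h
      have hcard : (s.erase a).card = n := by rw [Multiset.card_erase_of_mem has, hn, Nat.pred_succ]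
      rw [prod_factorial_count_eq_count_mul has (h ha), mul_left_comm, ih hsub hcard]
    rw [card_arrangements_eq_sum hs, sum_mul, sum_congr rfl hterm, ← sum_mul,
      Multiset.toFinset_sum_count_eq, hn, Nat.factorial_succ]

theorem card_arrangements (s : Multiset α) : #(arrangements s) = s.countPerms := by
  have hpos : 0 < ∏ a ∈ s.toFinset, (s.count a).factorial :=
    prod_pos fun a _ => Nat.factorial_pos _
  exact Nat.eq_of_mul_eq_mul_right hpos <|
    (card_arrangements_mul_prod_factorial_count subset_rfl).trans
      (countPerms_mul_prod_factorial_count subset_rfl).symm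

/-- The lists of pairs whose first components arrange `s` and whose second components arrange `t`;
meaningful only for `s.card = t.card`, since `List.zip` truncates. -/
def pairArrangements (s : Multiset α) (t : Multiset β) : Finset (List (α × β)) :=
  (arrangements s ×ˢ arrangements t).image fun x => x.1.zip x.2

lemma length_eq_length_of_mem_arrangements {s : Multiset α} {t : Multiset β} (h : s.card = t.card)
    {x : List α × List β} (hx : x ∈ arrangements s ×ˢ arrangements t) :
    x.1.length = x.2.length := by
  simp only [mem_product, mem_arrangements] at hx
  rw [← Multiset.coe_card, ← Multiset.coe_card, hx.1, hx.2, h]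

lemma mem_pairArrangements {s : Multiset α} {t : Multiset β} (h : s.card = t.card)
    {l : List (α × β)} : l ∈ pairArrangements s t ↔
      (l.map Prod.fst : Multiset α) = s ∧ (l.map Prod.snd : Multiset β) = t := by
  simp only [pairArrangements, mem_image]
  constructor
  · rintro ⟨x, hx, rfl⟩
    have hlen := length_eq_length_of_mem_arrangements h hx
    rw [List.map_fst_zip hlen.le, List.map_snd_zip hlen.ge]
    simpa using hx
  · intro hl
    refine ⟨(l.map Prod.fst, l.map Prod.snd), by simpa using hl, ?_⟩
    rw [← List.unzip_fst, ← List.unzip_snd, List.zip_unzip]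

theorem card_pairArrangements {s : Multiset α} {t : Multiset β} (h : s.card = t.card) :
    #(pairArrangements s t) = s.countPerms * t.countPerms := by
  rw [pairArrangements, card_image_of_injOn, card_product, card_arrangements, card_arrangements]
  intro x hx y hy hxy
  have hx' := length_eq_length_of_mem_arrangements h hx
  have hy' := length_eq_length_of_mem_arrangements h hy
  have hfst := congrArg (List.map Prod.fst) hxy
  have hsnd := congrArg (List.map Prod.snd) hxy
  simp only [List.map_fst_zip hx'.le, List.map_fst_zip hy'.le] at hfst
  simp only [List.map_snd_zip hx'.ge, List.map_snd_zip hy'.ge] at hsnd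
  exact Prod.ext hfst hsnd

end Arrangements

section Replicate

variable {α : Type*} [DecidableEq α]

lemma eq_add_replicate_iff {s t : Multiset α} {x : α} (hx : x ∉ t) {n : ℕ} :
    s = t + Multiset.replicate n x ↔ s.filter (x ≠ ·) = t ∧ s.card = t.card + n := by
  constructor
  · rintro rfl
    have ht : t.filter (x ≠ ·) = t :=
      Multiset.filter_eq_self.2 fun a ha => (ne_of_mem_of_not_mem ha hx).symm
    have hreplicate : (Multiset.replicate n x).filter (x ≠ ·) = 0 :=
      Multiset.filter_eq_nil.2 fun a ha => not_not.2 (Multiset.eq_of_mem_replicate ha).symm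
    simp [Multiset.filter_add, ht, hreplicate]
  · rintro ⟨rfl, hcard⟩
    have hsplit := Multiset.filter_add_not (x ≠ ·) s
    simp only [not_not, Multiset.filter_eq] at hsplit
    have hcount : s.count x = n := by
      have := congrArg Multiset.card hsplit
      rw [Multiset.card_add, Multiset.card_replicate] at this
      omega
    rw [← hcount, hsplit]

lemma countPerms_add_replicate {t : Multiset α} {x : α} (hx : x ∉ t) (n : ℕ) :
    (t + Multiset.replicate n x).countPerms = (t.card + n).choose t.card * t.countPerms := by
  have hfilter := ((eq_add_replicate_iff hx (n := n)).1 rfl).1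
  have hcount : (t + Multiset.replicate n x).count x = n := by simp [hx]
  rw [Multiset.countPerms_filter_ne x, hfilter, hcount, Multiset.card_add,
    Multiset.card_replicate, Nat.choose_symm_add]

lemma countPerms_replicate_add_replicate {x y : α} (hxy : x ≠ y) (a b : ℕ) :
    (Multiset.replicate a x + Multiset.replicate b y).countPerms = (a + b).choose a := by
  have hy : y ∉ Multiset.replicate a x := fun h => hxy (Multiset.eq_of_mem_replicate h).symm
  rw [countPerms_add_replicate hy, ← zero_add (Multiset.replicate a x),
    countPerms_add_replicate (Multiset.notMem_zero x)]
  simp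

lemma eq_replicate_true_add_replicate_false_iff {s : Multiset Bool} {a b : ℕ} :
    s = Multiset.replicate a true + Multiset.replicate b false ↔
      s.count true = a ∧ s.count false = b := by
  simp [Multiset.ext, Multiset.count_replicate, and_comm]

end Replicate

section CycleLemma

/-- The walk with increments `l` started at height `h` is nonnegative at every time before the
last one. -/
def NonnegBeforeEnd (h : ℤ) (l : List ℤ) : Prop :=
  ∀ i < l.length, 0 ≤ h + (l.take i).sum

/-- The walk with increments `l` started at `0` ends at `-1` and is nonnegative before. -/
def IsFirstPassage (l : List ℤ) : Prop :=
  l.sum = -1 ∧ NonnegBeforeEnd 0 l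

instance : DecidablePred IsFirstPassage := fun l =>
  inferInstanceAs (Decidable (l.sum = -1 ∧ ∀ i < l.length, 0 ≤ 0 + (l.take i).sum))

lemma nonnegBeforeEnd_cons {h x : ℤ} {l : List ℤ} :
    NonnegBeforeEnd h (x :: l) ↔ 0 ≤ h ∧ NonnegBeforeEnd (h + x) l := by
  simp only [NonnegBeforeEnd, List.length_cons]
  rw [Nat.forall_lt_succ_left]
  simp [add_assoc]

lemma sum_take_rotate_of_add_le {l : List ℤ} {i k : ℕ} (h : i + k ≤ l.length) :
    ((l.rotate i).take k).sum = (l.take (i + k)).sum - (l.take i).sum := by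
  rw [List.rotate_eq_drop_append_take (by omega),
    List.take_append_of_le_length (by rw [List.length_drop]; omega), List.take_add,
    List.sum_append]
  ring

lemma sum_take_rotate_of_le_add {l : List ℤ} {i k : ℕ} (hi : i ≤ l.length) (hk : k ≤ l.length)
    (h : l.length ≤ i + k) :
    ((l.rotate i).take k).sum = l.sum + (l.take (i + k - l.length)).sum - (l.take i).sum := by
  rw [List.rotate_eq_drop_append_take hi, List.take_append,
    List.take_of_length_le (by rw [List.length_drop]; omega), List.take_take, List.length_drop,
    List.sum_append, ← List.sum_take_add_sum_drop l i,
    show min (k - (l.length - i)) i = i + k - l.length by omega]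
  ring

-- The lexicographic order singles out the leftmost minimum of the partial sums.
lemma isFirstPassage_rotate_iff {l : List ℤ} (hl : l.sum = -1) {i : ℕ} (hi : i < l.length) :
    IsFirstPassage (l.rotate i) ↔
      ∀ k < l.length, toLex ((l.take i).sum, i) ≤ toLex ((l.take k).sum, k) := by
  simp only [IsFirstPassage, NonnegBeforeEnd, (l.rotate_perm i).sum_eq, hl, true_and,
    List.length_rotate, zero_add, Prod.Lex.toLex_le_toLex]
  constructor
  · intro h k hk
    rcases le_or_gt i k with hik | hki
    · have := h (k - i) (by omega)
      rw [sum_take_rotate_of_add_le (by omega), Nat.add_sub_cancel' hik] at this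
      omega
    · have := h (k + l.length - i) (by omega)
      rw [sum_take_rotate_of_le_add hi.le (by omega) (by omega), hl,
        show i + (k + l.length - i) - l.length = k by omega] at this
      omega
  · intro h k hk
    rcases lt_or_ge (i + k) l.length with hik | hik
    · have := h (i + k) hik
      rw [sum_take_rotate_of_add_le hik.le]
      omega
    · have := h (i + k - l.length) (by omega)
      rw [sum_take_rotate_of_le_add hi.le hk.le hik, hl]
      omega

theorem existsUnique_isFirstPassage_rotate {l : List ℤ} (hl : l.sum = -1) :
    ∃! i, i < l.length ∧ IsFirstPassage (l.rotate i) := by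
  have hne : (range l.length).Nonempty := by
    rw [nonempty_range_iff, Ne, List.length_eq_zero_iff]
    rintro rfl
    simp at hl
  obtain ⟨i, hi, hmin⟩ := exists_min_image _ (fun k => toLex ((l.take k).sum, k)) hne
  simp only [mem_range] at hi hmin
  refine ⟨i, ⟨hi, (isFirstPassage_rotate_iff hl hi).2 hmin⟩, ?_⟩
  rintro k ⟨hk, hkl⟩
  have heq := le_antisymm ((isFirstPassage_rotate_iff hl hk).1 hkl i hi) (hmin k hk)
  exact congrArg (fun x => (ofLex x).2) heq

variable {α : Type*}

lemma card_filter_isFirstPassage_rotate {S : Finset (List α)} (f : α → ℤ) (i : ℕ)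
    (hrot : ∀ l ∈ S, l.rotate i ∈ S) :
    #{l ∈ S | IsFirstPassage ((l.map f).rotate i)} = #{l ∈ S | IsFirstPassage (l.map f)} := by
  classical
  have hinj := List.rotate_injective (α := α) i
  have himage : S.image (List.rotate · i) = S :=
    eq_of_subset_of_card_le (image_subset_iff.2 hrot) (card_image_of_injective S hinj).ge
  conv_rhs => rw [← himage, filter_image, card_image_of_injective _ hinj]
  simp only [List.map_rotate]

theorem mul_card_filter_isFirstPassage {S : Finset (List α)} (f : α → ℤ) {n : ℕ}
    (hlen : ∀ l ∈ S, l.length = n) (hsum : ∀ l ∈ S, (l.map f).sum = -1)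
    (hrot : ∀ l ∈ S, ∀ i, l.rotate i ∈ S) :
    n * #{l ∈ S | IsFirstPassage (l.map f)} = #S := by
  have habove : ∀ l ∈ S, #{i ∈ range n | IsFirstPassage ((l.map f).rotate i)} = 1 := by
    intro l hl
    simpa [card_eq_one_iff_existsUnique, hlen l hl] using
      existsUnique_isFirstPassage_rotate (hsum l hl)
  have hbelow : ∀ i ∈ range n, #{l ∈ S | IsFirstPassage ((l.map f).rotate i)} =
      #{l ∈ S | IsFirstPassage (l.map f)} := fun i _ =>
    card_filter_isFirstPassage_rotate f i fun l hl => hrot l hl i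
  have hcount := sum_card_bipartiteAbove_eq_sum_card_bipartiteBelow (s := S) (t := range n)
    fun l i => IsFirstPassage ((l.map f).rotate i)
  simp only [bipartiteAbove, bipartiteBelow] at hcount
  rw [sum_congr rfl habove, sum_congr rfl hbelow] at hcount
  simpa using hcount.symm

end CycleLemma

section Blocks

/-- The height gained by a step. -/
def Step.rise : Step → ℤ
  | Step.u => 1
  | Step.d => -1
  | Step.h => 0

/-- The path made of the blocks in `l`, where the pair `(a, s)` stands for the block consisting of
`a` up-steps followed by a down-step if `s = true` and by a horizontal step otherwise. -/
def ofBlocks : List (ℕ × Bool) → List Step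
  | [] => []
  | (a, s) :: l => List.replicate a Step.u ++ (if s then Step.d else Step.h) :: ofBlocks l

/-- The height gained along a block. -/
def blockRise (b : ℕ × Bool) : ℤ :=
  b.1 - if b.2 then 1 else 0

/-- The decomposition of a path into blocks, inverse to `ofBlocks`; up-steps at the very end of the
path belong to no block and are dropped. -/
def toBlocks : List Step → List (ℕ × Bool)
  | [] => []
  | Step.u :: w => (toBlocks w).modifyHead fun b => (b.1 + 1, b.2)
  | Step.d :: w => (0, true) :: toBlocks w
  | Step.h :: w => (0, false) :: toBlocks w

lemma toBlocks_replicate_append (a : ℕ) (s : Bool) (w : List Step) :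
    toBlocks (List.replicate a Step.u ++ (if s then Step.d else Step.h) :: w) =
      (a, s) :: toBlocks w := by
  induction a with
  | zero => cases s <;> rfl
  | succ a ih => simp [List.replicate_succ, toBlocks, ih]

lemma toBlocks_ofBlocks (l : List (ℕ × Bool)) : toBlocks (ofBlocks l) = l := by
  induction l with
  | nil => rfl
  | cons b l ih => rw [ofBlocks, toBlocks_replicate_append, ih]

lemma ofBlocks_injective : Function.Injective ofBlocks :=
  Function.LeftInverse.injective toBlocks_ofBlocks

lemma ofBlocks_modifyHead {l : List (ℕ × Bool)} (hl : l ≠ []) :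
    ofBlocks (l.modifyHead fun b => (b.1 + 1, b.2)) = Step.u :: ofBlocks l := by
  obtain ⟨⟨a, s⟩, l, rfl⟩ := List.exists_cons_of_ne_nil hl
  rfl

lemma exists_ofBlocks_eq_append_d (w : List Step) : ∃ l, ofBlocks l = w ++ [Step.d] := by
  induction w with
  | nil => exact ⟨[(0, true)], rfl⟩
  | cons s w ih =>
    obtain ⟨l, hl⟩ := ih
    cases s with
    | u =>
      have hne : l ≠ [] := by
        rintro rfl
        simp [ofBlocks] at hl
      exact ⟨_, (ofBlocks_modifyHead hne).trans (congrArg _ hl)⟩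
    | d => exact ⟨(0, true) :: l, congrArg _ hl⟩
    | h => exact ⟨(0, false) :: l, congrArg _ hl⟩

lemma count_u_ofBlocks (l : List (ℕ × Bool)) :
    (ofBlocks l).count Step.u = (l.map Prod.fst).sum := by
  induction l with
  | nil => rfl
  | cons b l ih => obtain ⟨a, _ | _⟩ := b <;> simp [ofBlocks, ih]

lemma count_d_ofBlocks (l : List (ℕ × Bool)) :
    (ofBlocks l).count Step.d = (l.map Prod.snd).count true := by
  induction l with
  | nil => rfl
  | cons b l ih => obtain ⟨a, _ | _⟩ := b <;> simp [ofBlocks, ih, List.count_replicate]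

lemma count_h_ofBlocks (l : List (ℕ × Bool)) :
    (ofBlocks l).count Step.h = (l.map Prod.snd).count false := by
  induction l with
  | nil => rfl
  | cons b l ih => obtain ⟨a, _ | _⟩ := b <;> simp [ofBlocks, ih, List.count_replicate]

end Blocks

section Heights

lemma sum_map_rise (w : List Step) :
    (w.map Step.rise).sum = w.count Step.u - w.count Step.d := by
  induction w with
  | nil => rfl
  | cons s w ih => cases s <;> simp [Step.rise, ih] <;> ring

lemma sum_map_blockRise (l : List (ℕ × Bool)) :
    (l.map blockRise).sum = ((l.map Prod.fst).sum : ℤ) - (l.map Prod.snd).count true := by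
  induction l with
  | nil => rfl
  | cons b l ih => obtain ⟨a, _ | _⟩ := b <;> simp [blockRise, ih] <;> ring

lemma nonnegBeforeEnd_replicate_append {h x : ℤ} {a : ℕ} {l : List ℤ} :
    NonnegBeforeEnd h (List.replicate a 1 ++ x :: l) ↔
      0 ≤ h ∧ NonnegBeforeEnd (h + (a + x)) l := by
  induction a generalizing h with
  | zero => simp [nonnegBeforeEnd_cons]
  | succ a ih =>
    rw [List.replicate_succ, List.cons_append, nonnegBeforeEnd_cons, ih,
      show h + 1 + (a + x) = h + ((a + 1 : ℕ) + x) by push_cast; ring]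
    refine and_congr_right fun hh => and_iff_right (by omega)

lemma nonnegBeforeEnd_ofBlocks {h : ℤ} {l : List (ℕ × Bool)} :
    NonnegBeforeEnd h ((ofBlocks l).map Step.rise) ↔ NonnegBeforeEnd h (l.map blockRise) := by
  induction l generalizing h with
  | nil => rfl
  | cons b l ih =>
    obtain ⟨a, s⟩ := b
    have hrise : a + Step.rise (if s then Step.d else Step.h) = blockRise (a, s) := by
      cases s <;> rfl
    rw [ofBlocks, List.map_append, List.map_replicate, List.map_cons, List.map_cons,
      nonnegBeforeEnd_cons, ← ih, ← hrise]
    exact nonnegBeforeEnd_replicate_append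

lemma isFirstPassage_ofBlocks {l : List (ℕ × Bool)} :
    IsFirstPassage ((ofBlocks l).map Step.rise) ↔ IsFirstPassage (l.map blockRise) := by
  rw [IsFirstPassage, IsFirstPassage, nonnegBeforeEnd_ofBlocks, sum_map_rise, sum_map_blockRise,
    count_u_ofBlocks, count_d_ofBlocks]

lemma isFirstPassage_append_d {w : List Step} :
    IsFirstPassage ((w ++ [Step.d]).map Step.rise) ↔
      w.count Step.u = w.count Step.d ∧ IsNonneg w := by
  have hsum : ((w ++ [Step.d]).map Step.rise).sum = -1 ↔ w.count Step.u = w.count Step.d := by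
    simp only [sum_map_rise, List.count_append, List.count_singleton]
    grind
  rw [IsFirstPassage, hsum]
  refine and_congr_right fun hw => ?_
  simp only [NonnegBeforeEnd, IsNonneg, ← List.map_take, sum_map_rise, List.length_map,
    List.length_append, List.length_singleton]
  constructor
  · intro h i
    rcases le_or_gt i w.length with hi | hi
    · have := h i (by omega)
      rw [List.take_append_of_le_length hi] at this
      omega
    · rw [List.take_of_length_le hi.le]
      exact hw.ge
  · intro h i hi
    rw [List.take_append_of_le_length (by omega)]
    have := h i
    omega

lemma exists_eq_append_d_of_isFirstPassage {v : List Step}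
    (hv : IsFirstPassage (v.map Step.rise)) : ∃ w, v = w ++ [Step.d] := by
  obtain ⟨hsum, hnonneg⟩ := hv
  rcases List.eq_nil_or_concat v with rfl | ⟨w, s, rfl⟩
  · simp at hsum
  · have hw := hnonneg w.length (by simp)
    simp only [← List.map_take, List.take_left, List.concat_eq_append] at hw hsum ⊢
    cases s with
    | d => exact ⟨w, rfl⟩
    | u | h =>
      simp only [Step.rise, List.map_append, List.map_cons, List.map_nil, List.sum_append,
        List.sum_singleton] at hsum
      omega

end Heights

section Runs

lemma uRuns_cons_of_ne_u {s : Step} (hs : s ≠ Step.u) (w : List Step) :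
    uRuns (s :: w) = uRuns w := by
  cases s <;> simp_all [uRuns, runs]

lemma uRuns_u_cons_of_ne_u {s : Step} (hs : s ≠ Step.u) (w : List Step) :
    uRuns (Step.u :: s :: w) = 1 :: uRuns w := by
  cases s <;> simp_all [uRuns, runs]

lemma uRuns_u_cons_u (w : List Step) :
    uRuns (Step.u :: Step.u :: w) =
      match uRuns (Step.u :: w) with
      | a :: r => (1 + a) :: r
      | [] => [1] := by
  rw [uRuns, runs]

lemma uRuns_replicate_append {s : Step} (hs : s ≠ Step.u) (a : ℕ) (w : List Step) :
    uRuns (List.replicate (a + 1) Step.u ++ s :: w) = (a + 1) :: uRuns w := by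
  induction a with
  | zero => exact uRuns_u_cons_of_ne_u hs w
  | succ a ih =>
    rw [List.replicate_succ, List.cons_append] at ih ⊢
    rw [List.replicate_succ, List.cons_append, uRuns_u_cons_u, ih]
    simp [add_comm]

lemma uRuns_ofBlocks (l : List (ℕ × Bool)) :
    uRuns (ofBlocks l) = (l.map Prod.fst).filter (0 ≠ ·) := by
  induction l with
  | nil => rfl
  | cons b l ih =>
    obtain ⟨a, s⟩ := b
    have hs : (if s then Step.d else Step.h) ≠ Step.u := by cases s <;> simp
    cases a with
    | zero => simpa [ofBlocks, uRuns_cons_of_ne_u hs] using ih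
    | succ a => rw [ofBlocks, uRuns_replicate_append hs, ih]; simp

lemma uRuns_append_d (w : List Step) : uRuns (w ++ [Step.d]) = uRuns w := by
  induction w with
  | nil => rfl
  | cons s w ih =>
    match s, w with
    | Step.d, _ | Step.h, _ => simpa [uRuns_cons_of_ne_u] using ih
    | Step.u, [] => rfl
    | Step.u, Step.d :: _ | Step.u, Step.h :: _ =>
      simpa [uRuns_cons_of_ne_u, uRuns_u_cons_of_ne_u] using ih
    | Step.u, Step.u :: w =>
      simp only [List.cons_append] at ih ⊢
      rw [uRuns_u_cons_u, uRuns_u_cons_u, ih]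

end Runs

section Counting

variable {m : ℕ}

/-- The number of ups in the blocks: the parts of `p` together with enough zeros to have one entry
for each of the `m + 1` down-steps and the `j` horizontal steps. -/
def blockSizes (j : ℕ) (p : m.Partition) : Multiset ℕ :=
  p.parts + Multiset.replicate (m + j + 1 - p.parts.card) 0

/-- The endings of the blocks: `m + 1` down-steps and `j` horizontal steps. -/
def blockEnds (m j : ℕ) : Multiset Bool :=
  Multiset.replicate (m + 1) true + Multiset.replicate j false

lemma zero_notMem_parts (p : m.Partition) : 0 ∉ p.parts :=
  fun h => (p.parts_pos h).ne' rfl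

lemma card_parts_le (p : m.Partition) : p.parts.card ≤ m := by
  have := Multiset.card_nsmul_le_sum (a := 1) fun i hi => p.parts_pos (i := i) hi
  rwa [p.parts_sum, smul_eq_mul, mul_one] at this

lemma card_parts_add_sub (j : ℕ) (p : m.Partition) :
    p.parts.card + (m + j + 1 - p.parts.card) = m + j + 1 := by
  have := card_parts_le p
  omega

lemma card_blockSizes (j : ℕ) (p : m.Partition) : (blockSizes j p).card = m + j + 1 := by
  rw [blockSizes, Multiset.card_add, Multiset.card_replicate, card_parts_add_sub]

lemma sum_blockSizes (j : ℕ) (p : m.Partition) : (blockSizes j p).sum = m := by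
  simp [blockSizes, p.parts_sum]

lemma card_blockEnds (m j : ℕ) : (blockEnds m j).card = m + j + 1 := by
  rw [blockEnds, Multiset.card_add, Multiset.card_replicate, Multiset.card_replicate]
  ring

lemma countPerms_blockSizes (j : ℕ) (p : m.Partition) :
    (blockSizes j p).countPerms = (m + j + 1).choose p.parts.card * p.parts.countPerms := by
  rw [blockSizes, countPerms_add_replicate (zero_notMem_parts p), card_parts_add_sub]

lemma countPerms_blockEnds (m j : ℕ) :
    (blockEnds m j).countPerms = (m + j + 1).choose (m + 1) := by
  rw [blockEnds, countPerms_replicate_add_replicate (by decide), add_right_comm]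

/-- The block decompositions with contents `blockSizes j p` and `blockEnds m j`. -/
def blockLists (j : ℕ) (p : m.Partition) : Finset (List (ℕ × Bool)) :=
  pairArrangements (blockSizes j p) (blockEnds m j)

lemma mem_blockLists {j : ℕ} {p : m.Partition} {l : List (ℕ × Bool)} :
    l ∈ blockLists j p ↔
      (l.map Prod.fst : Multiset ℕ) = blockSizes j p ∧
        (l.map Prod.snd : Multiset Bool) = blockEnds m j :=
  mem_pairArrangements (by rw [card_blockSizes, card_blockEnds])

lemma rotate_mem_blockLists {j : ℕ} {p : m.Partition} {l : List (ℕ × Bool)}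
    (hl : l ∈ blockLists j p) (i : ℕ) : l.rotate i ∈ blockLists j p := by
  rw [mem_blockLists] at hl ⊢
  rwa [Multiset.coe_eq_coe.2 ((l.rotate_perm i).map _),
    Multiset.coe_eq_coe.2 ((l.rotate_perm i).map _)]

lemma mem_blockLists_iff_count {j : ℕ} {p : m.Partition} {l : List (ℕ × Bool)} :
    l ∈ blockLists j p ↔
      (uRuns (ofBlocks l) : Multiset ℕ) = p.parts ∧ (ofBlocks l).count Step.d = m + 1 ∧
        (ofBlocks l).count Step.h = j := by
  have hlen : l.length = (ofBlocks l).count Step.d + (ofBlocks l).count Step.h := by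
    rw [count_d_ofBlocks, count_h_ofBlocks, List.count_true_add_count_false, List.length_map]
  rw [mem_blockLists, blockSizes, blockEnds, eq_add_replicate_iff (zero_notMem_parts p),
    eq_replicate_true_add_replicate_false_iff, card_parts_add_sub, uRuns_ofBlocks,
    Multiset.filter_coe, Multiset.coe_card, List.length_map, Multiset.coe_count,
    Multiset.coe_count, ← count_d_ofBlocks, ← count_h_ofBlocks, and_assoc]
  exact and_congr_right fun _ => ⟨And.right, fun h => ⟨by omega, h⟩⟩

lemma count_u_ofBlocks_of_mem_blockLists {j : ℕ} {p : m.Partition} {l : List (ℕ × Bool)}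
    (hl : l ∈ blockLists j p) : (ofBlocks l).count Step.u = m := by
  rw [count_u_ofBlocks, ← Multiset.sum_coe, (mem_blockLists.1 hl).1, sum_blockSizes]

theorem mul_card_filter_blockLists (j : ℕ) (p : m.Partition) :
    (m + j + 1) * #{l ∈ blockLists j p | IsFirstPassage (l.map blockRise)} =
      (m + j + 1).choose p.parts.card * p.parts.countPerms * (m + j + 1).choose (m + 1) := by
  rw [mul_card_filter_isFirstPassage blockRise ?_ ?_ fun l hl => rotate_mem_blockLists hl,
    blockLists, card_pairArrangements, countPerms_blockSizes, countPerms_blockEnds]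
  · rw [card_blockSizes, card_blockEnds]
  · intro l hl
    rw [← l.length_map (f := Prod.fst), ← Multiset.coe_card, (mem_blockLists.1 hl).1,
      card_blockSizes]
  · intro l hl
    rw [sum_map_blockRise, ← count_u_ofBlocks, ← count_d_ofBlocks,
      count_u_ofBlocks_of_mem_blockLists hl, (mem_blockLists_iff_count.1 hl).2.1]
    push_cast
    ring

lemma mem_pathSet_iff_mem_blockLists {j : ℕ} {p : m.Partition} {w : List Step}
    {l : List (ℕ × Bool)} (hwl : ofBlocks l = w ++ [Step.d]) :
    w ∈ pathSet m j ∧ (uRuns w : Multiset ℕ) = p.parts ↔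
      l ∈ blockLists j p ∧ IsFirstPassage (l.map blockRise) := by
  rw [mem_blockLists_iff_count, ← isFirstPassage_ofBlocks, hwl, isFirstPassage_append_d,
    uRuns_append_d]
  simp only [pathSet, Set.mem_ofPred_eq, List.count_append, List.count_singleton]
  grind

theorem image_append_d_eq_image_ofBlocks (j : ℕ) (p : m.Partition) :
    (· ++ [Step.d]) '' {w ∈ pathSet m j | (uRuns w : Multiset ℕ) = p.parts} =
      ofBlocks '' {l ∈ blockLists j p | IsFirstPassage (l.map blockRise)} := by
  ext v
  constructor
  · rintro ⟨w, hw, rfl⟩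
    obtain ⟨l, hl⟩ := exists_ofBlocks_eq_append_d w
    exact ⟨l, (mem_pathSet_iff_mem_blockLists hl).1 hw, hl⟩
  · rintro ⟨l, hl, rfl⟩
    obtain ⟨w, hw⟩ := exists_eq_append_d_of_isFirstPassage (isFirstPassage_ofBlocks.2 hl.2)
    exact ⟨w, (mem_pathSet_iff_mem_blockLists hw).2 hl, hw.symm⟩

theorem succ_mul_ncard_pathSet (j : ℕ) (p : m.Partition) :
    (m + 1) * {w ∈ pathSet m j | (uRuns w : Multiset ℕ) = p.parts}.ncard =
      (m + j).choose m * ((m + j + 1).choose p.parts.card * p.parts.countPerms) := by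
  have hncard := congrArg Set.ncard (image_append_d_eq_image_ofBlocks j p)
  rw [Set.ncard_image_of_injective _ (List.append_left_injective _),
    Set.ncard_image_of_injective _ ofBlocks_injective, ← coe_filter, Set.ncard_coe_finset] at hncard
  have hcycle := mul_card_filter_blockLists j p
  have hchoose := Nat.add_one_mul_choose_eq (m + j) m
  rw [← hncard] at hcycle
  apply Nat.eq_of_mul_eq_mul_left (show 0 < m + j + 1 by omega)
  linear_combination (m + 1) * hcycle +
    (m + j + 1).choose p.parts.card * p.parts.countPerms * hchoose.symm

end Counting

section Multiplicities

variable {m : ℕ}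

lemma exists_partition_parts_eq_uRuns (w : List Step) :
    ∃ q : (w.count Step.u).Partition, q.parts = (uRuns w : Multiset ℕ) := by
  obtain ⟨l, hl⟩ := exists_ofBlocks_eq_append_d w
  have hsum : (l.map Prod.fst).sum = w.count Step.u := by
    rw [← count_u_ofBlocks, hl]
    simp
  refine ⟨Nat.Partition.ofSums _ (l.map Prod.fst : Multiset ℕ) (by simpa using hsum), ?_⟩
  rw [← uRuns_append_d, ← hl, uRuns_ofBlocks, Nat.Partition.ofSums_parts, ← Multiset.filter_coe]
  exact Multiset.filter_congr fun _ _ => ne_comm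

lemma toFinset_parts_subset (p : m.Partition) : p.parts.toFinset ⊆ Icc 1 m := fun i hi => by
  rw [Multiset.mem_toFinset] at hi
  exact mem_Icc.2 ⟨p.parts_pos hi, p.le_of_mem_parts hi⟩

lemma parts_eq_parts_iff {p q : m.Partition} :
    q.parts = p.parts ↔ ∀ i ∈ Icc 1 m, q.parts.count i = p.parts.count i := by
  refine ⟨fun h _ _ => by rw [h], fun h => Multiset.ext.2 fun i => ?_⟩
  by_cases hi : i ∈ Icc 1 m
  · exact h i hi
  · have hcount (p : m.Partition) : p.parts.count i = 0 := Multiset.count_eq_zero.2 fun hip =>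
      hi (toFinset_parts_subset p (Multiset.mem_toFinset.2 hip))
    rw [hcount, hcount]

lemma coe_uRuns_eq_parts_iff {j : ℕ} {p : m.Partition} {w : List Step} (hw : w ∈ pathSet m j) :
    (uRuns w : Multiset ℕ) = p.parts ↔ ∀ i ∈ Icc 1 m, alpha i w = p.parts.count i := by
  obtain ⟨rfl, -⟩ := hw
  obtain ⟨q, hq⟩ := exists_partition_parts_eq_uRuns w
  rw [← hq, parts_eq_parts_iff, hq]
  simp only [Multiset.coe_count, alpha]

/-- The partition of `m` with `r i` parts equal to `i`, for `1 ≤ i ≤ m`. -/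
def partitionOfMultiplicities (r : ℕ → ℕ) (hr : ∑ i ∈ Icc 1 m, i * r i = m) : m.Partition where
  parts := ∑ i ∈ Icc 1 m, Multiset.replicate (r i) i
  parts_pos {i} hi := by
    obtain ⟨k, hk, hik⟩ := Multiset.mem_sum.1 hi
    rw [Multiset.eq_of_mem_replicate hik]
    exact (mem_Icc.1 hk).1
  parts_sum := by
    simpa [Multiset.sum_sum, mul_comm] using hr

variable {r : ℕ → ℕ} (hr : ∑ i ∈ Icc 1 m, i * r i = m)

lemma count_parts_partitionOfMultiplicities {i : ℕ} (hi : i ∈ Icc 1 m) :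
    (partitionOfMultiplicities r hr).parts.count i = r i := by
  simp only [partitionOfMultiplicities, Multiset.count_sum', Multiset.count_replicate]
  rw [sum_ite_eq', if_pos hi]

lemma card_parts_partitionOfMultiplicities :
    (partitionOfMultiplicities r hr).parts.card = ∑ i ∈ Icc 1 m, r i := by
  simp [partitionOfMultiplicities]

lemma countPerms_parts_partitionOfMultiplicities :
    (partitionOfMultiplicities r hr).parts.countPerms * ∏ i ∈ Icc 1 m, (r i).factorial =
      (∑ i ∈ Icc 1 m, r i).factorial := by
  rw [← card_parts_partitionOfMultiplicities hr,
    ← countPerms_mul_prod_factorial_count (toFinset_parts_subset _)]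
  congr 1
  refine prod_congr rfl fun i hi => ?_
  rw [count_parts_partitionOfMultiplicities hr hi]

theorem ncard_pathSet_alpha {r : ℕ → ℕ} (hr : ∑ i ∈ Icc 1 m, i * r i = m) (j : ℕ) :
    (Set.ncard {w ∈ pathSet m j | ∀ i ∈ Icc 1 m, alpha i w = r i} : ℚ) =
      (1 : ℚ) / (m + 1) * Nat.choose (m + j) m * Nat.choose (m + j + 1) (∑ i ∈ Icc 1 m, r i) *
        ((∑ i ∈ Icc 1 m, r i).factorial : ℚ) / ∏ i ∈ Icc 1 m, ((r i).factorial : ℚ) := by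
  have hset : {w ∈ pathSet m j | ∀ i ∈ Icc 1 m, alpha i w = r i} =
      {w ∈ pathSet m j | (uRuns w : Multiset ℕ) = (partitionOfMultiplicities r hr).parts} := by
    ext w
    refine and_congr_right fun hw => ?_
    rw [coe_uRuns_eq_parts_iff hw]
    refine forall₂_congr fun i hi => ?_
    rw [count_parts_partitionOfMultiplicities hr hi]
  have hcount := succ_mul_ncard_pathSet j (partitionOfMultiplicities r hr)
  have hperms := countPerms_parts_partitionOfMultiplicities hr
  rw [card_parts_partitionOfMultiplicities hr] at hcount
  have hprod : ∏ i ∈ Icc 1 m, ((r i).factorial : ℚ) ≠ 0 :=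
    prod_ne_zero_iff.2 fun i _ => by positivity
  qify at hcount hperms
  rw [hset, ← hperms]
  field_simp
  linear_combination hcount

end Multiplicities

theorem stmt3 (k j m : ℕ) (hm : 1 ≤ m) (rv : ℕ → ℕ)
    (hsum : ∑ i ∈ Finset.Icc 1 m, i * rv i = m) :
    (Set.ncard {w ∈ pathSet m j | ∀ i ∈ Finset.Icc 1 m, alpha i w = rv i} : ℚ) =
      (1 : ℚ) / (m + 1) * Nat.choose (m + j) m *
        Nat.choose (m + j + 1) (∑ i ∈ Finset.Icc 1 m, rv i) *
        ((∑ i ∈ Finset.Icc 1 m, rv i).factorial : ℚ) /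
        ∏ i ∈ Finset.Icc 1 m, ((rv i).factorial : ℚ) ∧
    (Set.ncard {w ∈ pathSet m 0 | ∀ i ∈ Finset.Icc 1 m, alpha i w = rv i} : ℚ) =
      (1 : ℚ) / (m + 1) * Nat.choose (m + 1) (∑ i ∈ Finset.Icc 1 m, rv i) *
        ((∑ i ∈ Finset.Icc 1 m, rv i).factorial : ℚ) /
        ∏ i ∈ Finset.Icc 1 m, ((rv i).factorial : ℚ) := by
  refine ⟨ncard_pathSet_alpha hsum j, ?_⟩
  simpa using ncard_pathSet_alpha hsum 0
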